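/- Let M and N be topological spaces with M path-connected, fix basepoints x₀ ∈ M and y₀ ∈ N, and let f₁, f₂ : M → N be continuous maps with f₁(x₀) = f₂(x₀) = y₀. Let E(f₁,f₂) = {(x, γ) ∈ M × C([0,1], N) | γ(0) = f₁(x) and γ(1) = f₂(x)}, topologized as a subspace of M × C([0,1], N) with the compact-open topology on C([0,1], N). Define the Reidemeister set R(f₁,f₂) as the quotient of the fundamental group π₁(N, y₀) by the equivalence relation generated by α ∼ (f₁)₊(h) · α · ((f₂)₊(h))⁻¹ for all h ∈ π₁(M, x₀), where (f₁)₊, (f₂)₊ : π₁(M, x₀) → π₁(N, y₀) are the induced homomorphisms. Then the set π₀(E(f₁,f₂)) of path components of E(f₁,f₂) is in bijective correspondence with R(f₁,f₂). -/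

import Mathlib

open unitInterval

/-- The loop at `y₀` induced by a loop `h` at `x₀` under a continuous map `f` with
`f x₀ = y₀`. -/
noncomputable def inducedLoop {M N : Type*} [TopologicalSpace M] [TopologicalSpace N]
    {x₀ : M} {y₀ : N} (f : C(M, N)) (hf : f x₀ = y₀) (h : Path x₀ x₀) : Path y₀ y₀ :=
  (h.map f.continuous).cast hf.symm hf.symm

/-- The element of the fundamental group `π₁(N, y₀)` induced by a loop `h` at `x₀` under a
continuous map `f : M → N` with `f x₀ = y₀`; this is `f₊(h)`. -/
noncomputable def inducedElem {M N : Type*} [TopologicalSpace M] [TopologicalSpace N]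
    {x₀ : M} {y₀ : N} (f : C(M, N)) (hf : f x₀ = y₀) (h : Path x₀ x₀) :
    FundamentalGroup N y₀ :=
  FundamentalGroup.fromPath (X := TopCat.of N) (x := y₀)
    (Quotient.mk (Path.Homotopic.setoid y₀ y₀) (inducedLoop f hf h))

/-!
A path in `E(f₁, f₂)` from `(x, q)` to `(x', q')` is a path `p` in `M` from `x` to `x'` together
with a square in `N` with sides `q`, `q'`, `f₁ ∘ p` and `f₂ ∘ p`. Such a square exists exactly
when `q · (f₂ ∘ p)` and `(f₁ ∘ p) · q'` are homotopic: the sides of a square give the homotopy, and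
conversely `q` slides along `p` through the paths `(f₁ ∘ p|[0,s])⁻¹ · q · (f₂ ∘ p|[0,s])` to a path
homotopic to `q'`. Sliding also moves every point of `E(f₁, f₂)` into the fibre over `x₀`, where the
criterion, applied to loops `p`, is twisted conjugacy.
-/

section Homotopic

variable {N : Type*} [TopologicalSpace N]

theorem homotopic_trans_evalAt {y z y' z' : N} {q : Path y z} {q' : Path y' z'}
    (H : q.toContinuousMap.Homotopy q'.toContinuousMap) :
    (q.trans ((H.evalAt 1).cast q.target.symm q'.target.symm)).Homotopic
      (((H.evalAt 0).cast q.source.symm q'.source.symm).trans q') := by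
  obtain ⟨q, rfl, rfl⟩ := q
  obtain ⟨q', rfl, rfl⟩ := q'
  exact Path.Homotopic.map_trans_evalAt H Path.id

theorem symm_trans_homotopic_of_homotopic_trans {y z w : N} {p : Path y z} {q : Path y w}
    {r : Path z w} (h : q.Homotopic (p.trans r)) : (p.symm.trans q).Homotopic r :=
  calc
    Path.Homotopic (p.symm.trans q) (p.symm.trans (p.trans r)) := (Path.Homotopic.refl _).hcomp h
    Path.Homotopic _ ((p.symm.trans p).trans r) := (Path.Homotopic.trans_assoc _ _ _).symm
    Path.Homotopic _ ((Path.refl z).trans r) := (Path.Homotopic.symm_trans p).hcomp (.refl r)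
    Path.Homotopic _ r := Path.Homotopic.refl_trans r

end Homotopic

/-- The space `E(f₁, f₂)` of pairs `(x, γ)`, with `γ` a path from `f₁ x` to `f₂ x`, reducible so
that it unfolds to a subspace of `M × C(I, N)`. -/
abbrev CoincidencePathSpace {M N : Type*} [TopologicalSpace M] [TopologicalSpace N]
    (f₁ f₂ : C(M, N)) : Type _ :=
  {p : M × C(I, N) // p.2 0 = f₁ p.1 ∧ p.2 1 = f₂ p.1}

namespace CoincidencePathSpace

variable {M N : Type*} [TopologicalSpace M] [TopologicalSpace N] {f₁ f₂ : C(M, N)} {x x' : M}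

/-- The point `(x, q)` of `E(f₁, f₂)`, for a bundled path `q` from `f₁ x` to `f₂ x`. -/
def ofPath (q : Path (f₁ x) (f₂ x)) : CoincidencePathSpace f₁ f₂ :=
  ⟨(x, q.toContinuousMap), q.source, q.target⟩

theorem exists_ofPath_eq (e : CoincidencePathSpace f₁ f₂) :
    ∃ (x : M) (q : Path (f₁ x) (f₂ x)), ofPath q = e :=
  ⟨e.1.1, ⟨e.1.2, e.2.1, e.2.2⟩, rfl⟩

theorem joined_ofPath_of_continuous_family (p : C(I, M)) (γ : ∀ s, Path (f₁ (p s)) (f₂ (p s)))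
    (hγ : Continuous ↿γ) : Joined (ofPath (γ 0)) (ofPath (γ 1)) :=
  ⟨{ toFun := fun s => ofPath (γ s)
     continuous_toFun := Continuous.subtype_mk
       (p.continuous.prodMk (ContinuousMap.curry ⟨↿γ, hγ⟩).continuous) _
     source' := rfl
     target' := rfl }⟩

theorem joined_ofPath_of_homotopic {q q' : Path (f₁ x) (f₂ x)} (h : q.Homotopic q') :
    Joined (ofPath q) (ofPath q') := by
  obtain ⟨F⟩ := h
  have hF := joined_ofPath_of_continuous_family (.const I x) F.eval F.continuous
  rwa [F.eval_zero, F.eval_one] at hF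

/-- The transport `(f₁ ∘ p)⁻¹ · q · (f₂ ∘ p)` of a path `q` from `f₁ x` to `f₂ x` along a path `p`
in `M` starting at `x`. -/
noncomputable def transport (p : Path x x') (q : Path (f₁ x) (f₂ x)) : Path (f₁ x') (f₂ x') :=
  (p.map f₁.continuous).symm.trans (q.trans (p.map f₂.continuous))

theorem transport_refl_homotopic (q : Path (f₁ x) (f₂ x)) :
    (transport (Path.refl x) q).Homotopic q :=
  (Path.Homotopic.refl_trans _).trans (Path.Homotopic.trans_refl q)

theorem continuous_transport_family {ι : Type*} [TopologicalSpace ι] {b : ι → M}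
    (r : ∀ s, Path x (b s)) (hr : Continuous ↿r) (q : Path (f₁ x) (f₂ x)) :
    Continuous ↿fun s => transport (r s) q :=
  Path.trans_continuous_family _
    (Path.symm_continuous_family (fun s => (r s).map f₁.continuous) (f₁.continuous.comp hr)) _
    (Path.trans_continuous_family _ (q.continuous.comp continuous_snd) _ (f₂.continuous.comp hr))

theorem joined_ofPath_transport (p : Path x x') (q : Path (f₁ x) (f₂ x)) :
    Joined (ofPath q) (ofPath (transport p q)) := by
  obtain ⟨p, rfl, rfl⟩ := p
  let r (s : I) : Path (p 0) (p s) := (Path.mk p rfl rfl).subpath 0 s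
  have hr : Continuous ↿r :=
    (Path.subpath_continuous_family _).comp (continuous_const.prodMk continuous_id)
  have h := joined_ofPath_of_continuous_family p _ (continuous_transport_family r hr q)
  have r_zero : r 0 = Path.refl (p 0) := Path.subpath_self _ 0
  have r_one : r 1 = Path.mk p rfl rfl := Path.subpath_zero_one _
  rw [r_zero, r_one] at h
  exact (joined_ofPath_of_homotopic (transport_refl_homotopic q)).symm.trans h

theorem exists_homotopic_trans_of_joined {q : Path (f₁ x) (f₂ x)} {q' : Path (f₁ x') (f₂ x')}
    (h : Joined (ofPath q) (ofPath q')) : ∃ p : Path x x',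
      (q.trans (p.map f₂.continuous)).Homotopic ((p.map f₁.continuous).trans q') := by
  obtain ⟨P⟩ := h
  let p : Path x x' := P.map (continuous_fst.comp continuous_subtype_val)
  let H : q.toContinuousMap.Homotopy q'.toContinuousMap :=
    { toContinuousMap := ContinuousMap.uncurry
        ⟨fun s => (P s).1.2, continuous_snd.comp (continuous_subtype_val.comp P.continuous)⟩
      map_zero_left := fun t => DFunLike.congr_fun (congrArg (·.1.2) P.source) t
      map_one_left := fun t => DFunLike.congr_fun (congrArg (·.1.2) P.target) t }
  have H_zero : (H.evalAt 0).cast q.source.symm q'.source.symm = p.map f₁.continuous :=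
    Path.ext (funext fun s => (P s).2.1)
  have H_one : (H.evalAt 1).cast q.target.symm q'.target.symm = p.map f₂.continuous :=
    Path.ext (funext fun s => (P s).2.2)
  exact ⟨p, by simpa only [H_zero, H_one] using homotopic_trans_evalAt H⟩

theorem joined_ofPath_iff {q : Path (f₁ x) (f₂ x)} {q' : Path (f₁ x') (f₂ x')} :
    Joined (ofPath q) (ofPath q') ↔ ∃ p : Path x x',
      (q.trans (p.map f₂.continuous)).Homotopic ((p.map f₁.continuous).trans q') := by
  refine ⟨exists_homotopic_trans_of_joined, fun ⟨p, hp⟩ => ?_⟩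
  exact (joined_ofPath_transport p q).trans
    (joined_ofPath_of_homotopic (symm_trans_homotopic_of_homotopic_trans hp))

/-- The path component of `(x, q)` in `E(f₁, f₂)`, as a function of the homotopy class of `q`. -/
def component (a : Path.Homotopic.Quotient (f₁ x) (f₂ x)) :
    ZerothHomotopy (CoincidencePathSpace f₁ f₂) :=
  Quot.map ofPath (fun _ _ => joined_ofPath_of_homotopic) a

theorem component_eq_iff {a : Path.Homotopic.Quotient (f₁ x) (f₂ x)}
    {b : Path.Homotopic.Quotient (f₁ x') (f₂ x')} :
    component a = component b ↔ ∃ p : Path x x',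
      a.trans (.mk (p.map f₂.continuous)) = .trans (.mk (p.map f₁.continuous)) b := by
  obtain ⟨q, rfl⟩ := Path.Homotopic.Quotient.mk_surjective a
  obtain ⟨q', rfl⟩ := Path.Homotopic.Quotient.mk_surjective b
  simp only [← Path.Homotopic.Quotient.mk_trans, Path.Homotopic.Quotient.eq]
  exact Quotient.eq.trans joined_ofPath_iff

theorem component_surjective [PathConnectedSpace M] (x : M) :
    Function.Surjective
      (component : Path.Homotopic.Quotient (f₁ x) (f₂ x) →
        ZerothHomotopy (CoincidencePathSpace f₁ f₂)) := by
  rintro ⟨e⟩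
  obtain ⟨x', q, rfl⟩ := exists_ofPath_eq e
  obtain ⟨p⟩ := PathConnectedSpace.joined x' x
  exact ⟨.mk (transport p q), Quotient.sound (joined_ofPath_transport p q).symm⟩

end CoincidencePathSpace

-- Multiplication in `FundamentalGroup` is reversed concatenation, hence the inverses.
theorem inducedLoop_square_iff_twistedConj {M N : Type*} [TopologicalSpace M]
    [TopologicalSpace N] {x₀ : M} {y₀ : N} {f₁ f₂ : C(M, N)} (h₁ : f₁ x₀ = y₀) (h₂ : f₂ x₀ = y₀)
    (h : Path x₀ x₀) (α β : FundamentalGroup N y₀) :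
    Path.Homotopic.Quotient.trans α (.mk (inducedLoop f₂ h₂ h)) =
        .trans (.mk (inducedLoop f₁ h₁ h)) β ↔
      β⁻¹ = inducedElem f₁ h₁ h * α⁻¹ * (inducedElem f₂ h₂ h)⁻¹ := by
  change inducedElem f₂ h₂ h * α = β * inducedElem f₁ h₁ h ↔ _
  rw [eq_mul_inv_iff_mul_eq, inv_mul_eq_iff_eq_mul, ← mul_assoc, eq_mul_inv_iff_mul_eq]

open CoincidencePathSpace in
theorem zerothHomotopy_pathSpace_equiv_reidemeister_general
    {M N : Type*} [TopologicalSpace M] [TopologicalSpace N] [PathConnectedSpace M]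
    (x₀ : M) (y₁ y₂ : N) (f₁ f₂ : C(M, N)) (h₁ : f₁ x₀ = y₁) (h₂ : f₂ x₀ = y₂) :
    Nonempty
      (ZerothHomotopy (CoincidencePathSpace f₁ f₂) ≃
        Quot (fun a b : Path.Homotopic.Quotient y₁ y₂ => ∃ h : Path x₀ x₀,
          a.trans (.mk (inducedLoop f₂ h₂ h)) = .trans (.mk (inducedLoop f₁ h₁ h)) b)) := by
  subst h₁ h₂
  exact ⟨(Setoid.quotientKerEquivOfSurjective _ (component_surjective x₀)).symm.trans
    (Quot.congrRight fun _ _ => component_eq_iff)⟩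

/-- The set of path components of the path space `E(f₁, f₂)` is in bijection with the
Reidemeister set `R(f₁, f₂)`, i.e. the quotient of `π₁(N, y₀)` by the equivalence relation
generated by `α ∼ (f₁)₊(h) · α · ((f₂)₊(h))⁻¹` for `h ∈ π₁(M, x₀)`. -/
theorem zerothHomotopy_pathSpace_equiv_reidemeister
    {M N : Type*} [TopologicalSpace M] [TopologicalSpace N] [PathConnectedSpace M]
    (x₀ : M) (y₀ : N) (f₁ f₂ : C(M, N)) (h₁ : f₁ x₀ = y₀) (h₂ : f₂ x₀ = y₀) :
    Nonempty
      (ZerothHomotopy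
          {p : M × C(unitInterval, N) // p.2 0 = f₁ p.1 ∧ p.2 1 = f₂ p.1} ≃
        Quot (fun α β : FundamentalGroup N y₀ =>
          ∃ h : Path x₀ x₀, β = inducedElem f₁ h₁ h * α * (inducedElem f₂ h₂ h)⁻¹)) := by
  have ⟨e⟩ := zerothHomotopy_pathSpace_equiv_reidemeister_general x₀ y₀ y₀ f₁ f₂ h₁ h₂
  exact ⟨e.trans (Quot.congr (Equiv.inv (FundamentalGroup N y₀)) fun α β =>
    exists_congr fun h => inducedLoop_square_iff_twistedConj h₁ h₂ h α β)⟩
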